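/- arXiv:1909.03638 — 2 statements merged into one kernel-verified Lean document; each statement's English description precedes it below -/
import Mathlib

section
/- Let S and A be finite nonempty types, r : S → A → ℝ, P : S → A → S → ℝ a transition kernel with P s a s' ≥ 0 and ∑_{s'} P s a s' = 1 for all s, a, and γ ∈ [0,1). Let (g_S, g_A) be an MDP symmetry, i.e. bijections with r (g_S s) (g_A a) = r s a and P (g_S s) (g_A a) (g_S s') = P s a s' for all s, a, s'. Then the Bellman optimality operator T intertwines with the symmetry: for every Q : S → A → ℝ, one has T (fun s a => Q (g_S s) (g_A a)) = fun s a => (T Q) (g_S s) (g_A a). -/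
/-! A surjective relabelling of the actions preserves suprema over them, so the greedy value of a
pulled-back `Q` is the pullback of the greedy value of `Q`. Grouping the successor states by their
image under an MDP homomorphism then turns the expectation over the source MDP into the expectation
over the target MDP. A symmetry is an MDP homomorphism from the MDP to itself. -/

open Function Set Bornology

theorem hasSum_mul_of_hasSum_fiber {S S' R : Type*} [NonUnitalNonAssocSemiring R]
    [TopologicalSpace R] [RegularSpace R] [IsTopologicalSemiring R] {f : S → S'} {p : S → R}
    {p' v : S' → R} {x : R} (hp : ∀ t, HasSum (fun s : f ⁻¹' {t} => p s) (p' t))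
    (hx : HasSum (fun s => p s * v (f s)) x) : HasSum (fun t => p' t * v t) x := by
  refine ((Equiv.sigmaFiberEquiv f).hasSum_iff.mpr hx).sigma fun t => ?_
  have hv (s : f ⁻¹' {t}) : p s * v t = p s * v (f s) := congrArg (p s * v ·) s.2.symm
  exact funext hv ▸ (hp t).mul_right (v t)

theorem summable_mul_of_isBounded_range {S R : Type*} [NonUnitalSeminormedRing R] [CompleteSpace R]
    {p v : S → R} (hp : Summable fun s => ‖p s‖) (hv : IsBounded (range v)) :
    Summable fun s => p s * v s := by
  obtain ⟨C, hC⟩ := hv.exists_norm_le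
  refine .of_norm_bounded (hp.mul_right C) fun s => (norm_mul_le _ _).trans ?_
  gcongr
  exact hC _ (mem_range_self s)

theorem abs_ciSup_le {ι α : Type*} [Nonempty ι] [ConditionallyCompleteLattice α] [AddCommGroup α]
    [IsOrderedAddMonoid α] {f : ι → α} {C : α} (hf : ∀ i, |f i| ≤ C) : |⨆ i, f i| ≤ C := by
  have hle (i : ι) : f i ≤ C := (le_abs_self _).trans (hf i)
  have hge (i : ι) : -f i ≤ C := (neg_le_abs _).trans (hf i)
  have hbdd : BddAbove (range f) := ⟨C, forall_mem_range.mpr hle⟩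
  obtain ⟨i⟩ := ‹Nonempty ι›
  exact abs_le'.mpr ⟨ciSup_le hle, (neg_le_neg (le_ciSup hbdd i)).trans (hge i)⟩

/-- The value of acting greedily with respect to `Q`. It is meaningful only where `Q s` is bounded
above, since the supremum of an unbounded set of reals is `0`. -/
noncomputable def greedyValue {S A : Type*} (Q : S → A → ℝ) (s : S) : ℝ :=
  ⨆ a, Q s a

/-- The Bellman optimality operator of a possibly infinite MDP. The expectation over successor
states is a `tsum`, which is `0` if the series does not converge. -/
noncomputable def bellmanOptimality {S A : Type*} (r : S → A → ℝ) (P : S → A → S → ℝ) (γ : ℝ)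
    (Q : S → A → ℝ) (s : S) (a : A) : ℝ :=
  r s a + γ * ∑' s', P s a s' * greedyValue Q s'

/-- Homomorphisms of MDPs, in the sense of Ravindran and Barto: `f` maps states, `g s` maps the
actions available at `s`, and the target transition probability to `t` is the source probability of
reaching the fibre of `f` over `t`. -/
structure IsMDPHom {S S' A A' : Type*} (r : S → A → ℝ) (P : S → A → S → ℝ)
    (r' : S' → A' → ℝ) (P' : S' → A' → S' → ℝ) (f : S → S') (g : S → A → A') : Prop where
  surjective_action (s : S) : Surjective (g s)
  reward_map (s : S) (a : A) : r' (f s) (g s a) = r s a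
  hasSum_fiber (s : S) (a : A) (t : S') :
    HasSum (fun s' : f ⁻¹' {t} => P s a s') (P' (f s) (g s a) t)

section

variable {S S' A A' : Type*} {r : S → A → ℝ} {P : S → A → S → ℝ} {r' : S' → A' → ℝ}
  {P' : S' → A' → S' → ℝ} {γ : ℝ}

theorem greedyValue_comp {g : S → A → A'} (hg : ∀ s, Surjective (g s)) (f : S → S')
    (Q : S' → A' → ℝ) :
    greedyValue (fun s a => Q (f s) (g s a)) = greedyValue Q ∘ f :=
  funext fun s => (hg s).iSup_comp (Q (f s))

theorem isBounded_range_greedyValue [Nonempty A] {Q : S → A → ℝ}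
    (hQ : IsBounded (range (uncurry Q))) : IsBounded (range (greedyValue Q)) := by
  obtain ⟨C, hC⟩ := hQ.exists_norm_le
  exact isBounded_iff_forall_norm_le.mpr ⟨C, forall_mem_range.mpr fun s =>
    abs_ciSup_le fun a => hC _ (mem_range_self (s, a))⟩

theorem bellmanOptimality_eq_sum_sup' [Fintype S] [Fintype A] [Nonempty A] (Q : S → A → ℝ) (s : S)
    (a : A) :
    bellmanOptimality r P γ Q s a = r s a + γ * ∑ s', P s a s' *
      (Finset.univ.sup' Finset.univ_nonempty (fun a' => Q s' a')) := by
  simp only [bellmanOptimality, greedyValue, tsum_fintype, Finset.sup'_univ_eq_ciSup]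

theorem IsMDPHom.of_equiv (f : S ≃ S') {g : S → A → A'} (hg : ∀ s, Surjective (g s))
    (hr : ∀ s a, r' (f s) (g s a) = r s a) (hP : ∀ s a s', P' (f s) (g s a) (f s') = P s a s') :
    IsMDPHom r P r' P' f g where
  surjective_action := hg
  reward_map := hr
  hasSum_fiber s a t := by
    obtain ⟨u, rfl⟩ := f.surjective t
    rw [hP, ← image_singleton, f.preimage_image]
    exact hasSum_singleton u (P s a)

theorem IsMDPHom.tsum_mul_comp {f : S → S'} {g : S → A → A'} (h : IsMDPHom r P r' P' f g) {s : S}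
    {a : A} (hP : Summable (P s a)) {v : S' → ℝ} (hv : IsBounded (range v)) :
    ∑' s', P s a s' * v (f s') = ∑' t, P' (f s) (g s a) t * v t := by
  have hvf : IsBounded (range (v ∘ f)) := hv.subset (range_comp_subset_range f v)
  have hsum : Summable fun s' => P s a s' * v (f s') := summable_mul_of_isBounded_range hP.norm hvf
  exact (hasSum_mul_of_hasSum_fiber (h.hasSum_fiber s a) hsum.hasSum).tsum_eq.symm

theorem bellman_intertwines_symmetry_general {f : S → S'} {g : S → A → A'}
    (h : IsMDPHom r P r' P' f g) (hP : ∀ s a, Summable (P s a)) {Q : S' → A' → ℝ}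
    (hQ : IsBounded (range (uncurry Q))) :
    bellmanOptimality r P γ (fun s a => Q (f s) (g s a)) =
      fun s a => bellmanOptimality r' P' γ Q (f s) (g s a) := by
  funext s a
  have : Nonempty A' := ⟨g s a⟩
  simp only [bellmanOptimality, greedyValue_comp h.surjective_action, comp_apply, h.reward_map,
    h.tsum_mul_comp (hP s a) (isBounded_range_greedyValue hQ)]

end

/-- For a finite MDP with an MDP symmetry `(gS, gA)`, the Bellman
optimality operator `T` intertwines with the symmetry:
`T (fun s a => Q (gS s) (gA a)) = fun s a => (T Q) (gS s) (gA a)`. -/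
theorem bellman_intertwines_symmetry
    {S A : Type*} [Fintype S] [Fintype A] [Nonempty S] [Nonempty A]
    (r : S → A → ℝ) (P : S → A → S → ℝ)
    (hP0 : ∀ s a s', 0 ≤ P s a s') (hP1 : ∀ s a, ∑ s', P s a s' = 1)
    (γ : ℝ) (hγ0 : 0 ≤ γ) (hγ1 : γ < 1)
    (gS : S ≃ S) (gA : A ≃ A)
    (hr : ∀ s a, r (gS s) (gA a) = r s a)
    (hPsym : ∀ s a s', P (gS s) (gA a) (gS s') = P s a s')
    (T : (S → A → ℝ) → (S → A → ℝ))
    (hT : ∀ Q s a, T Q s a =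
      r s a + γ * ∑ s', P s a s' *
        (Finset.univ.sup' Finset.univ_nonempty (fun a' => Q s' a'))) :
    ∀ Q : S → A → ℝ,
      T (fun s a => Q (gS s) (gA a)) = fun s a => T Q (gS s) (gA a) := by
  obtain rfl : T = bellmanOptimality r P γ := by
    funext Q s a
    rw [hT, bellmanOptimality_eq_sum_sup']
  exact fun Q => bellman_intertwines_symmetry_general
    (.of_equiv gS (fun _ => gA.surjective) hr hPsym) (fun _ _ => .of_finite)
    (finite_range _).isBounded
end

section
/- Let E and F be real normed vector spaces, G a finite group, and ρ : G → (E →L[ℝ] E) a linear representation of G on E (i.e. ρ(1) = id and ρ(g h) = ρ(g) ∘ ρ(h)). Let L : E → ℝ satisfy L (ρ(g) x) = L x for all g ∈ G and x ∈ E. Let V = {x ∈ E : ρ(g) x = x for all g ∈ G} be the fixed subspace and let ι : F →L[ℝ] E be a continuous linear map whose range equals V. If θ* ∈ F is a local minimum of the restricted loss L ∘ ι and L is Fréchet differentiable at p := ι θ*, then the Fréchet derivative of L at p is zero: fderiv ℝ L p = 0, i.e. p is a critical point of the unrestricted loss L on all of E. -/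
/-! The derivative of an invariant function at a fixed point is an invariant linear map, so it takes
the same value at a vector and at its average over the group. The average is a fixed vector, and the
derivative vanishes on fixed vectors because these are the directions along `ι`. -/

section InvariantLinearMap

variable {k G V W : Type*} [CommRing k] [Group G] [Fintype G] [Invertible (Fintype.card G : k)]
  [AddCommGroup V] [Module k V] [AddCommMonoid W] [Module k W] {ρ : Representation k G V}

theorem linearMap_comp_averageMap_eq_self {φ : V →ₗ[k] W} (hφ : ∀ g, φ ∘ₗ ρ g = φ) :
    φ ∘ₗ ρ.averageMap = φ := by
  ext v
  have hφv (g : G) : φ (ρ g v) = φ v := LinearMap.congr_fun (hφ g) v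
  calc
    φ (ρ.averageMap v) = ⅟(Fintype.card G : k) • ∑ g, φ (ρ g v) := by
      simp [GroupAlgebra.average]
    _ = ⅟(Fintype.card G : k) • (Fintype.card G : k) • φ v := by
      simp only [hφv, Finset.sum_const, Finset.card_univ, Nat.cast_smul_eq_nsmul]
    _ = φ v := invOf_smul_smul _ _

theorem linearMap_eq_of_eqOn_invariants {φ ψ : V →ₗ[k] W} (hφ : ∀ g, φ ∘ₗ ρ g = φ)
    (hψ : ∀ g, ψ ∘ₗ ρ g = ψ) (h : Set.EqOn φ ψ ρ.invariants) : φ = ψ := by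
  rw [← linearMap_comp_averageMap_eq_self hφ, ← linearMap_comp_averageMap_eq_self hψ]
  ext v
  exact h (ρ.averageMap_invariant v)

end InvariantLinearMap

section SymmetricCriticality

variable {𝕜 E W : Type*} [NontriviallyNormedField 𝕜] [NormedAddCommGroup E] [NormedSpace 𝕜 E]
  [NormedAddCommGroup W] [NormedSpace 𝕜 W] {f : E → W} {f' : E →L[𝕜] W} {p : E}

theorem hasFDerivAt_comp_eq_self_of_isFixedPt {T : E → E} {T' : E →L[𝕜] E}
    (hf : HasFDerivAt f f' p) (hT : HasFDerivAt T T' p) (hfT : f ∘ T = f)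
    (hp : Function.IsFixedPt T p) : f' ∘L T' = f' := by
  have hcomp : HasFDerivAt (f ∘ T) (f' ∘L T') p := HasFDerivAt.comp p (hp.symm ▸ hf) hT
  rw [hfT] at hcomp
  exact hcomp.unique hf

/-- The principle of symmetric criticality (Palais), for finite groups. -/
theorem hasFDerivAt_eq_zero_of_forall_mem_invariants
    {G : Type*} [Group G] [Fintype G] [Invertible (Fintype.card G : 𝕜)]
    {π : ContRepresentation 𝕜 G E}
    (hf : HasFDerivAt f f' p) (hfπ : ∀ g, f ∘ π g = f) (hp : p ∈ π.invariants)
    (hf' : ∀ v ∈ π.invariants, f' v = 0) : f' = 0 := by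
  have hf'π (g : G) : f' ∘L π g = f' :=
    hasFDerivAt_comp_eq_self_of_isFixedPt hf (π g).hasFDerivAt (hfπ g) (hp g)
  apply ContinuousLinearMap.coe_injective
  exact linearMap_eq_of_eqOn_invariants (ρ := π.toRepresentation)
    (fun g ↦ congrArg ContinuousLinearMap.toLinearMap (hf'π g)) (fun _ ↦ LinearMap.zero_comp _) hf'

end SymmetricCriticality

/-- If `L : E → ℝ` is invariant under a linear representation `ρ` of a
finite group `G`, `ι : F →L[ℝ] E` has range equal to the fixed subspace of `ρ`, and
`θ*` is a local minimum of the restricted loss `L ∘ ι` with `L` differentiable at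
`p = ι θ*`, then `p` is a critical point of `L` on all of `E`. -/
theorem fixed_subspace_local_min_is_critical
    {E F : Type*} [NormedAddCommGroup E] [NormedSpace ℝ E]
    [NormedAddCommGroup F] [NormedSpace ℝ F]
    {G : Type*} [Group G] [Finite G]
    (ρ : G → E →L[ℝ] E)
    (hρ1 : ρ 1 = ContinuousLinearMap.id ℝ E)
    (hρm : ∀ g h : G, ρ (g * h) = (ρ g).comp (ρ h))
    (L : E → ℝ) (hLinv : ∀ (g : G) (x : E), L (ρ g x) = L x)
    (ι : F →L[ℝ] E)
    (hrange : Set.range ι = {x : E | ∀ g : G, ρ g x = x})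
    (θstar : F) (hmin : IsLocalMin (L ∘ ι) θstar)
    (hdiff : DifferentiableAt ℝ L (ι θstar)) :
    fderiv ℝ L (ι θstar) = 0 := by
  have := Fintype.ofFinite G
  have := invertibleOfNonzero (Nat.cast_ne_zero.2 Fintype.card_ne_zero : (Fintype.card G : ℝ) ≠ 0)
  let π : ContRepresentation ℝ G E := .ofMonoidHom ⟨⟨ρ, hρ1⟩, hρm⟩
  have hrestrict : fderiv ℝ L (ι θstar) ∘L ι = 0 :=
    hmin.hasFDerivAt_eq_zero (hdiff.hasFDerivAt.comp θstar ι.hasFDerivAt)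
  refine hasFDerivAt_eq_zero_of_forall_mem_invariants (π := π) hdiff.hasFDerivAt
    (fun g ↦ funext (hLinv g)) (hrange.subset ⟨θstar, rfl⟩) fun v hv ↦ ?_
  obtain ⟨w, rfl⟩ := hrange.superset hv
  exact DFunLike.congr_fun hrestrict w
end
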